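/- arXiv:1812.08993 — 3 statements merged into one kernel-verified Lean document; each statement's English description precedes it below -/
import Mathlib

section
/- Let q be a prime power, m ≥ 1, and let V be an F_q-subspace of F_{q^m} of dimension t ≤ m-1. Let G be a subgroup of the multiplicative group F_q^* of order r. Then there exist elements α_1 = 0, α_2, ..., α_ℓ in F_{q^m} with ℓ = 1 + (q^{m-t} - 1)/r such that the cosets V together with {α_i·g + V : 2 ≤ i ≤ ℓ, g ∈ G} are 1 + (ℓ-1)·r = q^{m-t} pairwise distinct cosets of V (and hence partition F_{q^m}). -/
open Polynomial Finset
open scoped Classical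

/-- The (additive) coset `a + V` of a set `V`. -/
def coset {K : Type*} [Add K] (V : Set K) (a : K) : Set K := {x | ∃ v ∈ V, x = a + v}

/-
Since the elements of `G` are nonzero scalars and `V` is a subspace, `G` acts on the quotient
`K ⧸ V`. A scalar other than `1` fixes no nonzero vector, so `G` acts freely on the nonzero vectors
of `K ⧸ V`, and the `G`-translates of representatives of the orbits run through the cosets other
than `V`, each exactly once.
-/

section FreeAction

variable {G X : Type*} [Group G] [MulAction G X] [IsCancelSMul G X]

theorem bijective_smul_quotient_out :
    Function.Bijective fun p : MulAction.orbitRel.Quotient G X × G ↦ p.2 • p.1.out := by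
  have mk_smul_out (ω : MulAction.orbitRel.Quotient G X) (g : G) :
      (Quotient.mk'' (g • ω.out) : MulAction.orbitRel.Quotient G X) = ω :=
    (Quotient.sound' (MulAction.mem_orbit ω.out g)).trans ω.out_eq'
  constructor
  · rintro ⟨ω, g⟩ ⟨ω', g'⟩ h
    obtain rfl : ω = ω' := by
      rw [← mk_smul_out ω g, ← mk_smul_out ω' g']
      exact congrArg _ h
    exact congrArg (Prod.mk ω) (IsCancelSMul.right_cancel _ _ _ h)
  · intro x
    obtain ⟨g, hg⟩ := (MulAction.orbitRel G X).symm (Quotient.mk_out x)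
    exact ⟨(Quotient.mk'' x, g), hg⟩

variable (G X) in
theorem exists_fin_bijective_smul [Finite X] :
    ∃ (n : ℕ) (β : Fin n → X), Function.Bijective fun p : Fin n × G ↦ p.2 • β p.1 := by
  have : Finite (MulAction.orbitRel.Quotient G X) := Quotient.finite _
  let e := (Finite.equivFin (MulAction.orbitRel.Quotient G X)).symm
  exact ⟨_, fun i ↦ (e i).out,
    bijective_smul_quotient_out.comp (e.prodCongr (Equiv.refl G)).bijective⟩

end FreeAction

theorem natCard_mul_add_one_of_bijOn_compl_singleton {ι G Q : Type*} [Finite Q] {f : ι × G → Q}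
    {a : Q} (hf : Set.BijOn f Set.univ {a}ᶜ) : Nat.card ι * Nat.card G + 1 = Nat.card Q := by
  rw [← Nat.card_prod, ← Set.ncard_univ, hf.ncard_eq, ← Set.ncard_add_ncard_compl {a},
    Set.ncard_singleton, add_comm]

section Coset

variable {R M : Type*} [Ring R] [AddCommGroup M] [Module R M] {V : Submodule R M}

theorem coset_eq_preimage_mkQ (a : M) : coset (V : Set M) a = V.mkQ ⁻¹' {V.mkQ a} := by
  ext x
  rw [Set.mem_preimage, Set.mem_singleton_iff, Submodule.mkQ_apply, Submodule.mkQ_apply,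
    Submodule.Quotient.eq]
  constructor
  · rintro ⟨v, hv, rfl⟩
    simpa using hv
  · exact fun h ↦ ⟨x - a, h, (add_sub_cancel a x).symm⟩

theorem mem_coset_iff {a x : M} : x ∈ coset (V : Set M) a ↔ V.mkQ x = V.mkQ a := by
  rw [coset_eq_preimage_mkQ, Set.mem_preimage, Set.mem_singleton_iff]

theorem coset_eq_coset_iff {a b : M} :
    coset (V : Set M) a = coset (V : Set M) b ↔ V.mkQ a = V.mkQ b := by
  rw [coset_eq_preimage_mkQ, coset_eq_preimage_mkQ, V.mkQ_surjective.preimage_injective.eq_iff,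
    Set.singleton_eq_singleton_iff]

end Coset

section ScalarAction

variable {F M G : Type*} [DivisionRing F] [AddCommGroup M] [Module F M] [Group G]
  {χ : G →* Fˣ}

theorem exists_bijOn_smul_compl_zero [Finite M] (hχ : Function.Injective χ) :
    ∃ (n : ℕ) (β : Fin n → M),
      Set.BijOn (fun p : Fin n × G ↦ χ p.2 • β p.1) Set.univ {0}ᶜ := by
  let : MulAction G {x : M // x ≠ 0} := MulAction.compHom _ χ
  have : IsCancelSMul G {x : M // x ≠ 0} :=
    { left_cancel' := fun g _ _ h ↦ MulAction.injective g h
      right_cancel' := fun _ _ x h ↦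
        hχ (Units.ext (smul_left_injective F x.2 (congrArg Subtype.val h))) }
  obtain ⟨n, β, hβ⟩ := exists_fin_bijective_smul G {x : M // x ≠ 0}
  refine ⟨n, fun i ↦ (β i).1, fun p _ ↦ (χ p.2 • β p.1).2, ?_, ?_⟩
  · exact (Subtype.val_injective.comp hβ.injective).injOn
  · intro x hx
    obtain ⟨p, hp⟩ := hβ.surjective ⟨x, hx⟩
    exact ⟨p, trivial, congrArg Subtype.val hp⟩

theorem exists_bijOn_mkQ_smul_compl_zero (V : Submodule F M) [Finite (M ⧸ V)]
    (hχ : Function.Injective χ) :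
    ∃ (n : ℕ) (γ : Fin n → M),
      Set.BijOn (fun p : Fin n × G ↦ V.mkQ (χ p.2 • γ p.1)) Set.univ {0}ᶜ := by
  obtain ⟨n, β, hβ⟩ := exists_bijOn_smul_compl_zero (M := M ⧸ V) hχ
  choose γ hγ using fun i ↦ V.mkQ_surjective (β i)
  have mkQ_smul (i : Fin n) (g : G) : V.mkQ (χ g • γ i) = χ g • β i := by
    rw [← hγ]
    exact V.mkQ.map_smul (χ g : F) (γ i)
  exact ⟨n, γ, hβ.congr fun p _ ↦ (mkQ_smul p.1 p.2).symm⟩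

end ScalarAction

theorem natCard_quotient_eq_pow_sub_finrank {F M : Type*} [DivisionRing F] [Finite F]
    [AddCommGroup M] [Module F M] [Finite M] {m : ℕ} (hM : Nat.card M = Nat.card F ^ m)
    (V : Submodule F M) : Nat.card (M ⧸ V) = Nat.card F ^ (m - Module.finrank F V) := by
  have hm : Module.finrank F M = m :=
    Nat.pow_right_injective Finite.one_lt_card (Module.natCard_eq_pow_finrank.symm.trans hM)
  rw [Module.natCard_eq_pow_finrank (K := F), V.finrank_quotient, hm]

theorem exists_injective_monoidHom_units_smul_eq_mul {F K : Type*} [Field F] [Ring K]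
    [Nontrivial K] [Algebra F K] {G : Subgroup Kˣ}
    (hG : ∀ g : G, ∃ a : F, algebraMap F K a = ((g : Kˣ) : K)) :
    ∃ χ : G →* Fˣ, Function.Injective χ ∧
      ∀ (g : G) (x : K), χ g • x = x * ((g : Kˣ) : K) := by
  let ι : Fˣ →* Kˣ := Units.map (algebraMap F K : F →* K)
  have hι : Function.Injective ι := Units.map_injective (algebraMap F K).injective
  have hle : G ≤ ι.range := by
    intro g hg
    obtain ⟨a, ha⟩ := hG ⟨g, hg⟩
    have ha0 : a ≠ 0 := by
      rintro rfl
      exact g.ne_zero (ha.symm.trans (map_zero _))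
    exact ⟨Units.mk0 a ha0, Units.ext ha⟩
  let χ : G →* Fˣ := (MonoidHom.ofInjective hι).symm.toMonoidHom.comp (Subgroup.inclusion hle)
  have hχ (g : G) : algebraMap F K (χ g : F) = ((g : Kˣ) : K) :=
    congrArg Units.val (MonoidHom.apply_ofInjective_symm hι (Subgroup.inclusion hle g))
  refine ⟨χ, (MonoidHom.ofInjective hι).symm.injective.comp (Subgroup.inclusion_injective hle),
    fun g x ↦ ?_⟩
  rw [Units.smul_def, Algebra.smul_def, Algebra.commutes, hχ]

theorem stmt0_general {F M G : Type*} [DivisionRing F] [AddCommGroup M] [Module F M]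
    [Group G] [Finite G] (V : Submodule F M) [Finite (M ⧸ V)]
    {χ : G →* Fˣ} (hχ : Function.Injective χ) :
    ((Nat.card (M ⧸ V) - 1) / Nat.card G) * Nat.card G + 1 = Nat.card (M ⧸ V) ∧
    ∃ α : Fin ((Nat.card (M ⧸ V) - 1) / Nat.card G + 1) → M,
      α 0 = 0 ∧
      (∀ i (g : G), i ≠ 0 → coset (V : Set M) (χ g • α i) ≠ coset (V : Set M) 0) ∧
      (∀ i j (gi gj : G), i ≠ 0 → j ≠ 0 →
        coset (V : Set M) (χ gi • α i) = coset (V : Set M) (χ gj • α j) → i = j ∧ gi = gj) ∧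
      (⋃ i, ⋃ g : G, coset (V : Set M) (χ g • α i)) = Set.univ := by
  obtain ⟨n, γ, hmaps, hinj, hsurj⟩ := exists_bijOn_mkQ_smul_compl_zero V hχ
  have hcard : n * Nat.card G + 1 = Nat.card (M ⧸ V) := by
    simpa using natCard_mul_add_one_of_bijOn_compl_singleton ⟨hmaps, hinj, hsurj⟩
  obtain rfl : n = (Nat.card (M ⧸ V) - 1) / Nat.card G := by
    rw [← hcard, Nat.add_sub_cancel, Nat.mul_div_cancel _ Nat.card_pos]
  refine ⟨hcard, Fin.cons 0 γ, Fin.cons_zero _ _, ?_, ?_, ?_⟩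
  · intro i g hi
    obtain ⟨i, rfl⟩ := Fin.exists_succ_eq.2 hi
    rw [Fin.cons_succ, Ne, coset_eq_coset_iff, map_zero]
    exact hmaps (Set.mem_univ (i, g))
  · intro i j gi gj hi hj h
    obtain ⟨i, rfl⟩ := Fin.exists_succ_eq.2 hi
    obtain ⟨j, rfl⟩ := Fin.exists_succ_eq.2 hj
    rw [Fin.cons_succ, Fin.cons_succ, coset_eq_coset_iff] at h
    obtain ⟨rfl, rfl⟩ := Prod.ext_iff.1 (hinj (Set.mem_univ (i, gi)) (Set.mem_univ (j, gj)) h)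
    exact ⟨rfl, rfl⟩
  · refine Set.eq_univ_of_forall fun x ↦ ?_
    simp only [Set.mem_iUnion, mem_coset_iff]
    by_cases hx : V.mkQ x = 0
    · exact ⟨0, 1, by rw [Fin.cons_zero, smul_zero, hx, map_zero]⟩
    · obtain ⟨⟨i, g⟩, -, h⟩ := hsurj hx
      exact ⟨i.succ, g, by rw [Fin.cons_succ, ← h]⟩

/-- existence of coset representatives `α_1 = 0, α_2, …, α_ℓ` such that
`V` together with the cosets `α_i g + V` (`2 ≤ i ≤ ℓ`, `g ∈ G`) are
`1 + (ℓ-1) r = q^{m-t}` pairwise distinct cosets of `V`, partitioning `F_{q^m}`. -/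
theorem stmt0 (q r m t : ℕ) (hq : IsPrimePow q) (hm : 1 ≤ m) (ht : t ≤ m - 1)
    (hr : r ∣ q - 1)
    (Fq K : Type*) [Field Fq] [Fintype Fq] [Field K] [Fintype K] [Algebra Fq K]
    (hcq : Fintype.card Fq = q) (hcK : Fintype.card K = q ^ m)
    (V : Submodule Fq K) (hV : Module.finrank Fq V = t)
    (G : Subgroup Kˣ) (hG : Nat.card G = r)
    (hGsub : ∀ g : G, ∃ a : Fq, algebraMap Fq K a = ((g : Kˣ) : K)) :
    ((q ^ (m - t) - 1) / r) * r + 1 = q ^ (m - t) ∧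
    ∃ α : Fin ((q ^ (m - t) - 1) / r + 1) → K,
      α 0 = 0 ∧
      (∀ (i : Fin ((q ^ (m - t) - 1) / r + 1)) (g : G), i ≠ 0 →
        coset (V : Set K) (α i * ((g : Kˣ) : K)) ≠ coset (V : Set K) 0) ∧
      (∀ (i j : Fin ((q ^ (m - t) - 1) / r + 1)) (gi gj : G), i ≠ 0 → j ≠ 0 →
        coset (V : Set K) (α i * ((gi : Kˣ) : K)) = coset (V : Set K) (α j * ((gj : Kˣ) : K)) →
        i = j ∧ gi = gj) ∧
      (⋃ i, ⋃ g : G, coset (V : Set K) (α i * ((g : Kˣ) : K))) = Set.univ := by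
  obtain ⟨χ, hχ, hχG⟩ := exists_injective_monoidHom_units_smul_eq_mul hGsub
  have : Finite (K ⧸ V) := Quotient.finite _
  have hcard : Nat.card (K ⧸ V) = q ^ (m - t) := by
    simpa [hcq, hV] using natCard_quotient_eq_pow_sub_finrank (by simpa [hcq]) V
  rw [← hcard, ← hG]
  simpa only [hχG] using stmt0_general V hχ
end

section
/- Suppose there exists a (q^m − 1, e, r·q^t; e+1) FHS set with e = (q^{m-t}−1)/r achieving the Peng–Fan bound, and an (n, s; v) one-coincidence sequence set with s > q^m − q^t − 1. If ⌈(n(q^m−1)e − v(e+1)) / (n(q^m−1)e − 1) · (n(q^m−1)) / (v(e+1))⌉ = ⌈((q^m−1)e − (e+1)) / ((q^m−1)e − 1) · (q^m−1)/(e+1)⌉, then there exists an optimal (n(q^m−1), e, r·q^t; v(e+1)) FHS set achieving the Peng–Fan bound. -/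
open Polynomial Finset
open scoped Classical

/-- Hamming correlation at delay `τ` of two length-`N` sequences (indices mod `N`). -/
def Hcorr {A : Type*} [DecidableEq A] {N : ℕ} (x y : Fin N → A) (τ : Fin N) : ℕ :=
  (Finset.univ.filter fun k => x k = y (k + τ)).card

/-- Maximum Hamming correlation of an FHS set `s` (autocorrelations at nonzero delays
and crosscorrelations at all delays). -/
def HmMax {A : Type*} [DecidableEq A] {M N : ℕ} (s : Fin M → Fin N → A) : ℕ :=
  Finset.univ.sup fun p : Fin M × Fin M × Fin N =>
    if p.1 = p.2.1 ∧ (p.2.2 : ℕ) = 0 then 0 else Hcorr (s p.1) (s p.2.1) p.2.2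

/-!
The lower bound is the Peng–Fan bound itself: summing the Hamming correlations over all pairs of
sequences and all delays counts each frequency as often as the square of its number of
appearances, and Cauchy–Schwarz bounds the sum of these squares from below.

For the upper bound, interleaving a set `S` with a one-coincidence set does not increase the
maximum Hamming correlation, as long as every frequency of `S` appears in at most `s` slots, so that
equal frequencies can be given different one-coincidence sequences. This is applied to a cyclotomic
set: with `α` a primitive element of `𝔽_{q^m}`, `L : 𝔽_{q^m} → 𝔽_q^{m-t}` linear and onto, and
`H ≤ 𝔽_q^×` of order `r`, take the sequences `k ↦ H • (L (α ^ k) + u)`, one for each of the `e`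
nonzero orbits `H • u`. Equality of two orbits is a disjunction of `r` linear conditions, each with
at most `|ker L| = q ^ t` solutions; so correlations are at most `r * q ^ t`, and a frequency
appears at most `e * r * q ^ t = q ^ m - q ^ t ≤ s` times.
-/

section Correlation

variable {A : Type*} [DecidableEq A] {M N : ℕ}

theorem HmMax_le_iff {S : Fin M → Fin N → A} {b : ℕ} :
    HmMax S ≤ b ↔
      ∀ i j (τ : Fin N), (i = j → (τ : ℕ) ≠ 0) → Hcorr (S i) (S j) τ ≤ b := by
  simp only [HmMax, Finset.sup_le_iff, mem_univ, true_imp_iff, Prod.forall, ← not_and]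
  refine forall₃_congr fun i j τ => ?_
  split_ifs with h <;> simp [h]

theorem Hcorr_le_HmMax (S : Fin M → Fin N → A) {i j : Fin M} {τ : Fin N}
    (h : i = j → (τ : ℕ) ≠ 0) : Hcorr (S i) (S j) τ ≤ HmMax S :=
  HmMax_le_iff.1 le_rfl i j τ h

theorem Hcorr_le_length (x y : Fin N → A) (τ : Fin N) : Hcorr x y τ ≤ N :=
  (card_le_univ _).trans_eq (Fintype.card_fin N)

theorem HmMax_comp_injective {A' : Type*} [DecidableEq A'] {φ : A → A'}
    (hφ : Function.Injective φ) (S : Fin M → Fin N → A) :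
    HmMax (fun i => φ ∘ S i) = HmMax S := by
  simp only [HmMax, Hcorr, Function.comp_apply, hφ.eq_iff]

/-- The number of slots, over all sequences of the set `S`, at which the frequency `a` appears.
Its maximum over `a` is the paper's `m(S)`. -/
def appearances (S : Fin M → Fin N → A) (a : A) : ℕ :=
  ∑ i, #{k | S i k = a}

theorem appearances_eq_card (S : Fin M → Fin N → A) (a : A) :
    appearances S a = #{p : Fin M × Fin N | S p.1 p.2 = a} := by
  simp only [appearances, card_filter, Fintype.sum_prod_type]

theorem appearances_comp_equiv {A' : Type*} [DecidableEq A'] (φ : A ≃ A')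
    (S : Fin M → Fin N → A) (a : A') :
    appearances (fun i => φ ∘ S i) a = appearances S (φ.symm a) := by
  simp only [appearances, Function.comp_apply, φ.eq_symm_apply]

theorem sum_appearances [Fintype A] (S : Fin M → Fin N → A) :
    ∑ a, appearances S a = M * N := by
  simp only [appearances_eq_card, sum_card_fiberwise_eq_card_filter]
  simp

theorem sum_Hcorr [Fintype A] [NeZero N] (x y : Fin N → A) :
    ∑ τ, Hcorr x y τ = ∑ a, #{k | x k = a} * #{k | y k = a} := by
  calc ∑ τ, Hcorr x y τ = ∑ k, ∑ τ, if x k = y (k + τ) then 1 else 0 := by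
        simp only [Hcorr, card_filter]
        exact sum_comm
    _ = ∑ k, #{l | y l = x k} := by
        refine sum_congr rfl fun k _ => ?_
        rw [card_filter, ← Equiv.sum_comp (Equiv.addLeft k) fun l => if y l = x k then 1 else 0]
        simp only [Equiv.coe_addLeft, eq_comm]
    _ = ∑ a, ∑ k with x k = a, #{l | y l = a} := (sum_fiberwise' _ x fun a => #{l | y l = a}).symm
    _ = ∑ a, #{k | x k = a} * #{k | y k = a} := by simp only [sum_const, smul_eq_mul]

theorem sum_Hcorr_eq_sum_appearances_sq [Fintype A] [NeZero N] (S : Fin M → Fin N → A) :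
    ∑ i, ∑ j, ∑ τ, Hcorr (S i) (S j) τ = ∑ a, appearances S a ^ 2 := by
  simp only [sum_Hcorr, appearances, sq, sum_mul_sum]
  rw [sum_congr rfl fun i _ => sum_comm, sum_comm]

theorem sum_Hcorr_le [NeZero N] (S : Fin M → Fin N → A) :
    (∑ i, ∑ j, ∑ τ, (Hcorr (S i) (S j) τ : ℚ)) ≤ M * (N + (M * N - 1) * HmMax S) := by
  have bound (i j : Fin M) (τ : Fin N) : (Hcorr (S i) (S j) τ : ℚ) ≤
      HmMax S + if i = j then if τ = 0 then (N - HmMax S : ℚ) else 0 else 0 := by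
    by_cases h : i = j ∧ τ = 0
    · simpa [h.1, h.2] using Hcorr_le_length (S j) (S j) 0
    · have hle := Hcorr_le_HmMax S (i := i) (j := j) (τ := τ) fun hij hτ => h ⟨hij, Fin.ext hτ⟩
      simpa [← ite_and, h] using hle
  refine (sum_le_sum fun i _ => sum_le_sum fun j _ => sum_le_sum fun τ _ => bound i j τ).trans_eq ?_
  simp only [sum_add_distrib, sum_ite_irrel, sum_ite_eq, sum_ite_eq', mem_univ, if_true,
    sum_const, smul_zero, card_univ, Fintype.card_fin, nsmul_eq_mul]
  ring

/-- The Peng–Fan lower bound on the maximum Hamming correlation of a set of `M` sequences of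
length `N` over `l` frequencies. The fraction has the junk value `0` when `N * M = 1`. -/
def pengFanBound (N M l : ℕ) : ℤ :=
  ⌈((N * M - l) / (N * M - 1) * (N / l) : ℚ)⌉

theorem pengFanBound_mul_pow_sub_one {n q m M v l : ℕ} (hq : 0 < q) :
    pengFanBound (n * (q ^ m - 1)) M (v * (l + 1)) =
      ⌈((n * (q ^ m - 1) * M - v * (l + 1)) / (n * (q ^ m - 1) * M - 1) *
        (n * (q ^ m - 1) / (v * (l + 1))) : ℚ)⌉ := by
  simp only [pengFanBound, Nat.cast_mul, Nat.cast_pred (Nat.pow_pos hq), Nat.cast_pow,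
    Nat.cast_succ]

theorem pengFanBound_le_HmMax [Fintype A] [NeZero M] [NeZero N] (S : Fin M → Fin N → A) :
    pengFanBound N M (Fintype.card A) ≤ HmMax S := by
  have hM : (0 : ℚ) < M := Nat.cast_pos.2 (NeZero.pos M)
  have hNM : (1 : ℚ) ≤ N * M := by exact_mod_cast Nat.mul_pos (NeZero.pos N) (NeZero.pos M)
  have cauchy : ((M * N : ℕ) : ℚ) ^ 2 ≤
      Fintype.card A * ∑ i, ∑ j, ∑ τ, (Hcorr (S i) (S j) τ : ℚ) := by
    rw [← sum_appearances S]
    have := sq_sum_le_card_mul_sum_sq (s := univ) (f := appearances S)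
    rw [← sum_Hcorr_eq_sum_appearances_sq] at this
    exact_mod_cast this
  have key : (M : ℚ) * (M * N ^ 2) ≤
      M * (Fintype.card A * (N + (M * N - 1) * HmMax S)) := by
    calc (M * (M * N ^ 2) : ℚ) = ((M * N : ℕ) : ℚ) ^ 2 := by push_cast; ring
      _ ≤ Fintype.card A * (M * (N + (M * N - 1) * HmMax S)) :=
        cauchy.trans (mul_le_mul_of_nonneg_left (sum_Hcorr_le S) (Nat.cast_nonneg _))
      _ = M * (Fintype.card A * (N + (M * N - 1) * HmMax S)) := by ring
  rw [pengFanBound, Int.ceil_le, div_mul_div_comm, Int.cast_natCast]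
  refine div_le_of_le_mul₀ (mul_nonneg (sub_nonneg.2 hNM) (Nat.cast_nonneg _))
    (Nat.cast_nonneg _) ?_
  linarith [le_of_mul_le_mul_left key hM]

end Correlation

section Interleaving

theorem exists_injective_prodMk_of_card_fiber_le {ι A : Type*} [Fintype ι] [DecidableEq A]
    {s : ℕ} (f : ι → A) (h : ∀ a, #{i | f i = a} ≤ s) :
    ∃ g : ι → Fin s, Function.Injective fun i => (f i, g i) := by
  have fiber_emb (a : A) : Nonempty ({i // f i = a} ↪ Fin s) :=
    Function.Embedding.nonempty_of_card_le (by
      rw [Fintype.card_subtype, Fintype.card_fin]; exact h a)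
  let emb (a : A) := (fiber_emb a).some
  refine ⟨fun i => emb (f i) ⟨i, rfl⟩, fun i j hij => ?_⟩
  obtain ⟨hf, hemb⟩ := Prod.ext_iff.1 hij
  have transport : ∀ a (h : f i = a), emb (f i) ⟨i, rfl⟩ = emb a ⟨i, h⟩ := by rintro _ rfl; rfl
  exact congrArg Subtype.val ((emb (f j)).injective ((transport _ hf).symm.trans hemb))

variable {n N : ℕ}

theorem modNat_add (k τ : Fin (n * N)) : (k + τ).modNat = k.modNat + τ.modNat := by
  ext
  simp only [Fin.coe_modNat, Fin.val_add, Nat.mod_mul_left_mod, Nat.mod_add_mod, Nat.add_mod_mod]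

theorem divNat_add [NeZero n] (k τ : Fin (n * N)) :
    (k + τ).divNat = k.divNat + Fin.ofNat n ((k.modNat + τ) / N) := by
  have hN : 0 < N := k.modNat.pos
  ext
  have split : (k : ℕ) + τ = N * (k / N) + (k % N + τ) := by
    rw [← add_assoc, Nat.div_add_mod]
  simp only [Fin.coe_divNat, Fin.coe_modNat, Fin.val_add, Fin.val_ofNat, Nat.add_mod_mod]
  rw [split, Nat.mod_mul_left_div_self, Nat.mul_add_div hN]

theorem eq_of_modNat_eq_of_divNat_eq {k l : Fin (n * N)} (hmod : k.modNat = l.modNat)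
    (hdiv : k.divNat = l.divNat) : k = l :=
  finProdFinEquiv.symm.injective (Prod.ext hdiv hmod)

/-- One-coincidence sequence sets: `s` distinct sequences of length `n`, in each of which no
frequency repeats, any two of them having Hamming correlation at most one at every delay. -/
structure IsOneCoincidence {B : Type*} [DecidableEq B] {s n : ℕ} (C : Fin s → Fin n → B) :
    Prop where
  injective : Function.Injective C
  nonrepeating : ∀ i, Function.Injective (C i)
  Hcorr_le_one : ∀ i j, i ≠ j → ∀ τ, Hcorr (C i) (C j) τ ≤ 1

variable {A B : Type*} {M s : ℕ}

/-- The recursive construction: `n` periods of each sequence of `S`, where the slots at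
position `k` of the successive periods of `S i` are paired with the successive terms of the
sequence of `C` numbered `label (i, k)`. -/
def interleave (S : Fin M → Fin N → A) (C : Fin s → Fin n → B) (label : Fin M × Fin N → Fin s) :
    Fin M → Fin (n * N) → A × B :=
  fun i k => (S i k.modNat, C (label (i, k.modNat)) k.divNat)

variable {S : Fin M → Fin N → A} {C : Fin s → Fin n → B}
  {label : Fin M × Fin N → Fin s}

theorem interleave_injective [NeZero n] [NeZero N] (hC : Function.Injective C)
    (hlabel : Function.Injective fun p => (S p.1 p.2, label p)) :
    Function.Injective (interleave S C label) := by
  intro i j hij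
  have heads (k : Fin n) : S i 0 = S j 0 ∧ C (label (i, 0)) k = C (label (j, 0)) k := by
    obtain ⟨hdiv, hmod⟩ := Prod.mk.inj (finProdFinEquiv.symm_apply_apply (k, (0 : Fin N)))
    simpa only [interleave, hdiv, hmod, Prod.mk.injEq] using
      congrFun hij (finProdFinEquiv (k, 0))
  have label_eq : label (i, 0) = label (j, 0) := hC (funext fun k => (heads k).2)
  exact (Prod.mk.inj (hlabel (Prod.ext (heads 0).1 label_eq))).1

variable [DecidableEq A] [DecidableEq B]

theorem Hcorr_interleave_self (hC : IsOneCoincidence C) (i : Fin M) {τ : Fin (n * N)}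
    (hτ : (τ : ℕ) ≠ 0) (hmod : (τ.modNat : ℕ) = 0) :
    Hcorr (interleave S C label i) (interleave S C label i) τ = 0 := by
  have : NeZero (n * N) := .of_pos τ.pos
  have : NeZero N := .of_pos τ.modNat.pos
  have modNat_shift (k : Fin (n * N)) : (k + τ).modNat = k.modNat := by
    rw [modNat_add, Fin.ext hmod (b := 0), add_zero]
  refine card_eq_zero.2 (filter_eq_empty_iff.2 fun k _ hk => hτ ?_)
  have hdiv : k.divNat = (k + τ).divNat := by
    apply hC.nonrepeating (label (i, k.modNat))
    simpa only [interleave, modNat_shift] using congrArg Prod.snd hk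
  have : k = k + τ := eq_of_modNat_eq_of_divNat_eq (modNat_shift k).symm hdiv
  simpa using this

theorem Hcorr_interleave_le (hC : IsOneCoincidence C)
    (hlabel : Function.Injective fun p => (S p.1 p.2, label p)) {i j : Fin M} {τ : Fin (n * N)}
    (hτ : i = j → (τ.modNat : ℕ) ≠ 0) :
    Hcorr (interleave S C label i) (interleave S C label j) τ ≤ Hcorr (S i) (S j) τ.modNat := by
  have : NeZero n := .of_pos τ.divNat.pos
  have : NeZero N := .of_pos τ.modNat.pos
  have coincidence (k : Fin (n * N)) :
      interleave S C label i k = interleave S C label j (k + τ) ↔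
        S i k.modNat = S j (k.modNat + τ.modNat) ∧
          C (label (i, k.modNat)) k.divNat = C (label (j, k.modNat + τ.modNat))
            (k.divNat + Fin.ofNat n ((k.modNat + τ) / N)) := by
    simp only [interleave, Prod.mk.injEq, modNat_add, divNat_add]
  simp only [Hcorr, coincidence]
  refine card_le_card_of_injOn Fin.modNat (fun k hk =>
    mem_coe.2 (mem_filter.2 ⟨mem_univ _, (mem_filter.1 (mem_coe.1 hk)).2.1⟩))
    fun k hk l hl hkl => ?_
  obtain ⟨hS, hCk⟩ := (mem_filter.1 (mem_coe.1 hk)).2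
  obtain ⟨-, hCl⟩ := (mem_filter.1 (mem_coe.1 hl)).2
  rw [← hkl] at hCl
  have label_ne : label (i, k.modNat) ≠ label (j, k.modNat + τ.modNat) := by
    intro h
    obtain ⟨hij, hk⟩ := Prod.mk.inj (hlabel (Prod.ext hS h))
    exact hτ hij (congrArg Fin.val (left_eq_add.1 hk))
  have hdiv : k.divNat = l.divNat :=
    card_le_one.1 (hC.Hcorr_le_one _ _ label_ne _) _ (mem_filter.2 ⟨mem_univ _, hCk⟩)
      _ (mem_filter.2 ⟨mem_univ _, hCl⟩)
  exact eq_of_modNat_eq_of_divNat_eq hkl hdiv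

theorem HmMax_interleave_le (hC : IsOneCoincidence C)
    (hlabel : Function.Injective fun p => (S p.1 p.2, label p)) :
    HmMax (interleave S C label) ≤ HmMax S := by
  refine HmMax_le_iff.2 fun i j τ hτ => ?_
  by_cases hmod : i = j → (τ.modNat : ℕ) ≠ 0
  · exact (Hcorr_interleave_le hC hlabel hmod).trans (Hcorr_le_HmMax S hmod)
  · obtain ⟨rfl, hzero⟩ := Classical.not_imp.1 hmod
    rw [Hcorr_interleave_self hC i (hτ rfl) (not_ne_iff.1 hzero)]
    exact Nat.zero_le _

theorem exists_HmMax_le_of_appearances_le [NeZero n] [NeZero N] (S : Fin M → Fin N → A)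
    (hS : ∀ a, appearances S a ≤ s) (hC : IsOneCoincidence C) :
    ∃ X : Fin M → Fin (n * N) → A × B, Function.Injective X ∧ HmMax X ≤ HmMax S := by
  simp only [appearances_eq_card] at hS
  obtain ⟨label, hlabel⟩ := 
    exists_injective_prodMk_of_card_fiber_le (fun p : Fin M × Fin N => S p.1 p.2) hS
  exact ⟨interleave S C label, interleave_injective hC.injective hlabel,
    HmMax_interleave_le hC hlabel⟩

end Interleaving

section OrbitSequences

theorem card_filter_exists_le {ι κ : Type*} [Finite ι] [Fintype κ] {P : ι → κ → Prop}
    {c : ℕ} (h : ∀ i, #{k | P i k} ≤ c) : #{k | ∃ i, P i k} ≤ Nat.card ι * c := by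
  have := Fintype.ofFinite ι
  rw [Nat.card_eq_fintype_card, ← card_univ]
  refine (card_le_card (t := univ.biUnion fun i => {k | P i k}) fun k hk => ?_).trans
    (card_biUnion_le_card_mul _ _ _ fun i _ => h i)
  simpa using hk

variable {F K V : Type*} [Field F] [Field K] [Algebra F K] [AddCommGroup V] [Module F V]

theorem natCard_add_natCard_eq_natCard_orbits_mul_add_one [Finite V] (H : Subgroup Fˣ) [Finite H] :
    Nat.card V + Nat.card H =
      Nat.card (MulAction.orbitRel.Quotient H V) * Nat.card H + 1 := by
  have := Fintype.ofFinite V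
  have := Fintype.ofFinite H
  have card_fixedBy_one : Fintype.card (MulAction.fixedBy V (1 : H)) = Fintype.card V := by
    simp [MulAction.fixedBy]
  have card_fixedBy_of_ne (h : H) (hh : h ≠ 1) : Fintype.card (MulAction.fixedBy V h) = 1 := by
    have hne : ((h : Fˣ) : F) - 1 ≠ 0 := sub_ne_zero.2 (by simpa using hh)
    have : MulAction.fixedBy V h = {0} := Set.ext fun v =>
      calc h • v = v ↔ (((h : Fˣ) : F) - 1) • v = 0 := by
            rw [sub_smul, one_smul, sub_eq_zero]; rfl
        _ ↔ v = 0 := smul_eq_zero_iff_right hne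
    simp [this]
  have burnside := MulAction.sum_card_fixedBy_eq_card_orbits_mul_card_group H V
  rw [← add_sum_erase univ _ (mem_univ (1 : H)), card_fixedBy_one,
    sum_congr rfl fun h hh => card_fixedBy_of_ne h (ne_of_mem_erase hh), ← card_eq_sum_ones]
    at burnside
  simp only [Nat.card_eq_fintype_card]
  rw [← burnside, add_assoc, card_erase_add_one (mem_univ _), card_univ]

theorem exists_nonzero_orbit_representatives {H : Subgroup Fˣ} {e : ℕ}
    (hQ : Nat.card (MulAction.orbitRel.Quotient H V) = e + 1) :
    ∃ u : Fin e → V, (∀ i, u i ≠ 0) ∧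
      Function.Injective fun i => (⟦u i⟧ : MulAction.orbitRel.Quotient H V) := by
  have := Nat.finite_of_card_ne_zero (hQ.trans_ne e.succ_ne_zero)
  let φ := Finite.equivFinOfCardEq hQ
  let o : MulAction.orbitRel.Quotient H V := ⟦0⟧
  refine ⟨fun i => (φ.symm ((φ o).succAbove i)).out, fun i hi => ?_, ?_⟩
  · have h : o = φ.symm ((φ o).succAbove i) := by
      rw [← Quotient.out_eq (φ.symm ((φ o).succAbove i))]
      exact congrArg _ hi.symm
    exact Fin.succAbove_ne (φ o) i (φ.eq_symm_apply.1 h).symm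
  · simp only [Quotient.out_eq]
    exact φ.symm.injective.comp Fin.succAbove_right_injective

/-- The sequence of `H`-orbits of `L (α ^ k) + u`, for `0 ≤ k < N`. With `α` a primitive element of
`K` and `u` running over representatives of the nonzero orbits, these sequences form the FHS set
to which the recursive construction is applied. -/
def orbitSeq (H : Subgroup Fˣ) (L : K →ₗ[F] V) (α : Kˣ) (N : ℕ) (u : V) :
    Fin N → MulAction.orbitRel.Quotient H V :=
  fun k => ⟦L (α ^ (k : ℕ) : Kˣ) + u⟧

variable {H : Subgroup Fˣ} {L : K →ₗ[F] V} {α : Kˣ} {N : ℕ}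

theorem card_filter_map_mul_pow_eq_le [Finite (LinearMap.ker L)] (hα : orderOf α = N) {β : K}
    (hβ : β ≠ 0) (w : V) :
    #{k : Fin N | L (β * (α ^ (k : ℕ) : Kˣ)) = w} ≤ Nat.card (LinearMap.ker L) := by
  obtain hempty | ⟨k₀, hk₀⟩ := eq_empty_or_nonempty {k : Fin N | L (β * (α ^ (k : ℕ) : Kˣ)) = w}
  · rw [hempty, card_empty]
    exact Nat.zero_le _
  have := Fintype.ofFinite (LinearMap.ker L)
  let x (k : Fin N) : K := β * (α ^ (k : ℕ) : Kˣ)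
  have x_injective : Function.Injective x := fun k l hkl => by
    have hpow := Units.ext (mul_left_cancel₀ hβ hkl)
    exact Fin.ext (pow_injOn_Iio_orderOf (hα.symm ▸ k.isLt) (hα.symm ▸ l.isLt) hpow)
  rw [Nat.card_eq_fintype_card, ← Fintype.card_coe]
  refine Fintype.card_le_of_injective (fun k => ⟨x k - x k₀, ?_⟩) fun k l hkl => ?_
  · rw [LinearMap.sub_mem_ker_iff]
    exact (mem_filter.1 k.2).2.trans (mem_filter.1 hk₀).2.symm
  · exact Subtype.ext (x_injective (sub_left_injective (congrArg Subtype.val hkl)))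

theorem card_filter_orbitSeq_eq_le [Finite H] [Finite (LinearMap.ker L)] (hα : orderOf α = N)
    (u : V) (c : MulAction.orbitRel.Quotient H V) :
    #{k | orbitSeq H L α N u k = c} ≤ Nat.card H * Nat.card (LinearMap.ker L) := by
  induction c using Quotient.inductionOn with | h y
  have mem_orbit (k : Fin N) : orbitSeq H L α N u k = ⟦y⟧ ↔
      ∃ h : H, L (1 * (α ^ (k : ℕ) : Kˣ)) = h • y - u := by
    simp only [one_mul, eq_sub_iff_add_eq, eq_comm (a := _ + u)]
    exact Quotient.eq
  simp only [mem_orbit]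
  exact card_filter_exists_le fun h => card_filter_map_mul_pow_eq_le hα one_ne_zero _

theorem Hcorr_orbitSeq_le [Finite H] [Finite (LinearMap.ker L)] (hα : orderOf α = N) {u u' : V}
    {τ : Fin N} (hτ : ∀ h : H, h • u' = u → algebraMap F K (h : Fˣ) * (α ^ (τ : ℕ) : Kˣ) ≠ 1) :
    Hcorr (orbitSeq H L α N u) (orbitSeq H L α N u') τ ≤
      Nat.card H * Nat.card (LinearMap.ker L) := by
  let β (h : H) : K := 1 - algebraMap F K (h : Fˣ) * (α ^ (τ : ℕ) : Kˣ)
  have coincidence (k : Fin N) :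
      orbitSeq H L α N u k = orbitSeq H L α N u' (k + τ) ↔
        ∃ h : H, L (β h * (α ^ (k : ℕ) : Kˣ)) = h • u' - u := by
    have hpow : α ^ ((k + τ : Fin N) : ℕ) = α ^ (τ : ℕ) * α ^ (k : ℕ) := by
      have hmod := pow_mod_orderOf α (k + τ)
      rwa [hα, ← Fin.val_add, add_comm (k : ℕ), pow_add] at hmod
    have same_orbit : orbitSeq H L α N u k = orbitSeq H L α N u' (k + τ) ↔
        ∃ h : H, h • (L (α ^ ((k + τ : Fin N) : ℕ) : Kˣ) + u') = L (α ^ (k : ℕ) : Kˣ) + u :=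
      Quotient.eq
    rw [same_orbit]
    refine exists_congr fun h => ?_
    have hL : L (β h * (α ^ (k : ℕ) : Kˣ)) =
        L (α ^ (k : ℕ) : Kˣ) - h • L (α ^ ((k + τ : Fin N) : ℕ) : Kˣ) := by
      rw [sub_mul, one_mul, map_sub, mul_assoc, ← Algebra.smul_def, map_smul, hpow,
        Units.val_mul]
      rfl
    rw [hL, smul_add, sub_eq_sub_iff_add_eq_add, add_comm (h • _), eq_comm]
  simp only [Hcorr, coincidence]
  refine card_filter_exists_le fun h => ?_
  by_cases hβ : β h = 0
  · have hu : h • u' - u ≠ 0 := fun hu => hτ h (sub_eq_zero.1 hu) (sub_eq_zero.1 hβ).symm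
    simp [hβ, hu.symm]
  · exact card_filter_map_mul_pow_eq_le hα hβ _

theorem HmMax_orbitSeq_le [Finite H] [Finite (LinearMap.ker L)] (hα : orderOf α = N) {e : ℕ}
    {u : Fin e → V} (hne : ∀ i, u i ≠ 0)
    (hu : Function.Injective fun i => (⟦u i⟧ : MulAction.orbitRel.Quotient H V)) :
    HmMax (fun i => orbitSeq H L α N (u i)) ≤ Nat.card H * Nat.card (LinearMap.ker L) := by
  refine HmMax_le_iff.2 fun i j τ hτ => Hcorr_orbitSeq_le hα fun h hh hone => ?_
  obtain rfl : i = j := hu (Quotient.sound ⟨h, hh⟩)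
  have h_eq_one : ((h : Fˣ) : F) = 1 := smul_left_injective F (hne i) (hh.trans (one_smul F _).symm)
  have pow_eq_one : α ^ (τ : ℕ) = 1 := by
    rwa [h_eq_one, map_one, one_mul, Units.val_eq_one] at hone
  have dvd := orderOf_dvd_of_pow_eq_one pow_eq_one
  rw [hα] at dvd
  exact hτ rfl (Nat.eq_zero_of_dvd_of_lt dvd τ.isLt)

theorem appearances_orbitSeq_le [Finite H] [Finite (LinearMap.ker L)] (hα : orderOf α = N)
    {e : ℕ} (u : Fin e → V) (c : MulAction.orbitRel.Quotient H V) :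
    appearances (fun i => orbitSeq H L α N (u i)) c ≤
      e * (Nat.card H * Nat.card (LinearMap.ker L)) :=
  (sum_le_card_nsmul _ _ _ fun i _ => card_filter_orbitSeq_eq_le hα (u i) c).trans_eq
    (by rw [card_univ, Fintype.card_fin, smul_eq_mul])

end OrbitSequences

section CyclotomicSet

theorem exists_linearMap_surjective_of_finrank_le {F K V : Type*} [Field F] [AddCommGroup K]
    [Module F K] [AddCommGroup V] [Module F V] [FiniteDimensional F K] [FiniteDimensional F V]
    (h : Module.finrank F V ≤ Module.finrank F K) :
    ∃ L : K →ₗ[F] V, Function.Surjective L := by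
  obtain ⟨f, hf⟩ := finrank_le_iff_exists_linearMap.1 h
  obtain ⟨L, hL⟩ := f.exists_leftInverse_of_injective (LinearMap.ker_eq_bot.2 hf)
  exact ⟨L, fun v => ⟨f v, LinearMap.congr_fun hL v⟩⟩

theorem exists_linearMap_natCard_ker_eq {F K : Type*} [Field F] [AddCommGroup K]
    [Module F K] [FiniteDimensional F K] {t : ℕ} (ht : t ≤ Module.finrank F K) :
    ∃ L : K →ₗ[F] (Fin (Module.finrank F K - t) → F),
      Nat.card (LinearMap.ker L) = Nat.card F ^ t := by
  obtain ⟨L, hL⟩ := exists_linearMap_surjective_of_finrank_le (F := F) (K := K)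
    (V := Fin (Module.finrank F K - t) → F) (by simp)
  have rank_nullity := LinearMap.finrank_range_add_finrank_ker L
  rw [LinearMap.range_eq_top.2 hL, finrank_top, Module.finrank_fin_fun] at rank_nullity
  exact ⟨L, by rw [Module.natCard_eq_pow_finrank (K := F)]; congr 1; omega⟩

theorem exists_field_extension_of_isPrimePow {q m : ℕ} (hq : IsPrimePow q) (hm : m ≠ 0) :
    ∃ (F K : Type) (_ : Field F) (_ : Finite F) (_ : Field K) (_ : Algebra F K),
      Nat.card F = q ∧ Module.finrank F K = m := by
  obtain ⟨p, k, hp, hk, rfl⟩ := (isPrimePow_nat_iff q).1 hq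
  have : Fact p.Prime := ⟨hp⟩
  have : NeZero m := ⟨hm⟩
  exact ⟨GaloisField p k, FiniteField.Extension (GaloisField p k) p m, inferInstance,
    inferInstance, inferInstance, inferInstance, GaloisField.card p k hk.ne',
    FiniteField.finrank_extension ..⟩

theorem exists_fhs_of_isPrimePow {q r m t e : ℕ} (hq : IsPrimePow q) (ht : t < m)
    (hr : r ∣ q - 1) (he : e * r + 1 = q ^ (m - t)) {A : Type*} [Fintype A] [DecidableEq A]
    (hA : Fintype.card A = e + 1) :
    ∃ S : Fin e → Fin (q ^ m - 1) → A,
      HmMax S ≤ r * q ^ t ∧ ∀ a, appearances S a ≤ e * (r * q ^ t) := by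
  obtain ⟨F, K, _, _, _, _, rfl, rfl⟩ :=
    exists_field_extension_of_isPrimePow hq (Nat.ne_zero_of_lt ht)
  have : FiniteDimensional F K := .of_finrank_pos (Nat.zero_lt_of_lt ht)
  have : Finite K := Module.finite_of_finite F
  obtain ⟨H, rfl⟩ : ∃ H : Subgroup Fˣ, Nat.card H = r :=
    ⟨(powMonoidHom r).ker, by
      rw [IsCyclic.card_powMonoidHom_ker, Nat.card_units, Nat.gcd_eq_right hr]⟩
  obtain ⟨L, hL⟩ := exists_linearMap_natCard_ker_eq ht.le
  obtain ⟨α, hα⟩ := IsCyclic.exists_ofOrder_eq_natCard (α := Kˣ)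
  rw [Nat.card_units, Module.natCard_eq_pow_finrank (K := F)] at hα
  have card_orbits : Nat.card (MulAction.orbitRel.Quotient H
      (Fin (Module.finrank F K - t) → F)) = e + 1 := by
    have burnside := natCard_add_natCard_eq_natCard_orbits_mul_add_one
      (V := Fin (Module.finrank F K - t) → F) H
    rw [Nat.card_fun, Nat.card_eq_fintype_card (α := Fin _), Fintype.card_fin, ← he] at burnside
    exact Nat.eq_of_mul_eq_mul_right (Nat.card_pos (α := H)) (by linarith)
  obtain ⟨u, hne, hu⟩ := exists_nonzero_orbit_representatives card_orbits
  let φ : MulAction.orbitRel.Quotient H (Fin (Module.finrank F K - t) → F) ≃ A :=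
    (Finite.equivFinOfCardEq card_orbits).trans (Fintype.equivFinOfCardEq hA).symm
  refine ⟨fun i => φ ∘ orbitSeq H L α _ (u i), ?_, fun a => ?_⟩
  · rw [HmMax_comp_injective φ.injective, ← hL]
    exact HmMax_orbitSeq_le hα hne hu
  · rw [appearances_comp_equiv, ← hL]
    exact appearances_orbitSeq_le hα u _

end CyclotomicSet

theorem stmt17_general {q r m t e n s : ℕ} (hq : IsPrimePow q) (ht : t < m) (hr : r ∣ q - 1)
    (he : e * r + 1 = q ^ (m - t)) (hn : 1 ≤ n) {A B : Type*} [Fintype A] [DecidableEq A]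
    [Fintype B] [DecidableEq B] (hA : Fintype.card A = e + 1) {C : Fin s → Fin n → B}
    (hC : IsOneCoincidence C) (hs : q ^ m - q ^ t - 1 < s)
    (hopt : pengFanBound (n * (q ^ m - 1)) e (Fintype.card B * (e + 1)) = (r * q ^ t : ℕ)) :
    ∃ X : Fin e → Fin (n * (q ^ m - 1)) → A × B,
      Function.Injective X ∧ HmMax X = r * q ^ t ∧
        (HmMax X : ℤ) = pengFanBound (n * (q ^ m - 1)) e (Fintype.card B * (e + 1)) := by
  have he₀ : e * r ≠ 0 := fun h =>
    (Nat.one_lt_pow (Nat.sub_ne_zero_of_lt ht) hq.one_lt).ne (by rw [← he, h])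
  have : NeZero e := ⟨left_ne_zero_of_mul he₀⟩
  have : NeZero n := .of_pos hn
  have : NeZero (q ^ m - 1) :=
    ⟨Nat.sub_ne_zero_of_lt (Nat.one_lt_pow (Nat.ne_zero_of_lt ht) hq.one_lt)⟩
  have slots_le : e * (r * q ^ t) ≤ s := by
    have : q ^ m = e * (r * q ^ t) + q ^ t := by
      rw [← Nat.sub_add_cancel ht.le, pow_add, ← he]; ring
    omega
  obtain ⟨S, hS, appearances_le⟩ := exists_fhs_of_isPrimePow hq ht hr he hA
  obtain ⟨X, X_injective, hX⟩ :=
    exists_HmMax_le_of_appearances_le S (fun a => (appearances_le a).trans slots_le) hC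
  have lower_bound := pengFanBound_le_HmMax X
  rw [Fintype.card_prod, hA, mul_comm (e + 1), hopt, Nat.cast_le] at lower_bound
  have HmMax_eq : HmMax X = r * q ^ t := (hX.trans hS).antisymm lower_bound
  exact ⟨X, X_injective, HmMax_eq, by rw [HmMax_eq, hopt]⟩

/-- recursive optimality: from an optimal `(q^m-1, e, r q^t; e+1)` FHS
set achieving the Peng–Fan bound and an `(n, s; v)` OC sequence set with
`s > q^m - q^t - 1`, if the Peng–Fan ceilings for the old and new parameters agree,
then there is an optimal `(n(q^m-1), e, r q^t; v(e+1))` FHS set achieving the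
Peng–Fan bound. -/
theorem stmt17 (q r m t e n s v : ℕ) (hq : IsPrimePow q) (hm : 1 ≤ m) (ht : t ≤ m - 1)
    (hr : r ∣ q - 1) (hr2 : 2 ≤ r) (he : e * r + 1 = q ^ (m - t)) (hn : 1 ≤ n)
    (A B : Type*) [Fintype A] [DecidableEq A] [Fintype B] [DecidableEq B]
    (hA : Fintype.card A = e + 1) (hB : Fintype.card B = v)
    (S : Fin e → Fin (q ^ m - 1) → A) (hSinj : Function.Injective S)
    (hSH : HmMax S = r * q ^ t)
    (hSopt : ((r * q ^ t : ℕ) : ℤ) =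
      ⌈((((q : ℚ) ^ m - 1) * e - ((e : ℚ) + 1)) / (((q : ℚ) ^ m - 1) * e - 1)) *
        (((q : ℚ) ^ m - 1) / ((e : ℚ) + 1))⌉)
    (C : Fin s → Fin n → B) (hCinj : Function.Injective C)
    (hCnonrep : ∀ i : Fin s, Function.Injective (C i))
    (hCcross : ∀ i j : Fin s, i ≠ j → ∀ τ : Fin n, Hcorr (C i) (C j) τ ≤ 1)
    (hs : q ^ m - q ^ t - 1 < s)
    (hceil : ⌈(((n : ℚ) * ((q : ℚ) ^ m - 1) * e - (v : ℚ) * ((e : ℚ) + 1)) /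
          ((n : ℚ) * ((q : ℚ) ^ m - 1) * e - 1)) *
          (((n : ℚ) * ((q : ℚ) ^ m - 1)) / ((v : ℚ) * ((e : ℚ) + 1)))⌉ =
        ⌈((((q : ℚ) ^ m - 1) * e - ((e : ℚ) + 1)) / (((q : ℚ) ^ m - 1) * e - 1)) *
          (((q : ℚ) ^ m - 1) / ((e : ℚ) + 1))⌉) :
    ∃ X : Fin e → Fin (n * (q ^ m - 1)) → A × B, Function.Injective X ∧
      HmMax X = r * q ^ t ∧
      ((HmMax X : ℕ) : ℤ) =
        ⌈(((n : ℚ) * ((q : ℚ) ^ m - 1) * e - (v : ℚ) * ((e : ℚ) + 1)) /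
          ((n : ℚ) * ((q : ℚ) ^ m - 1) * e - 1)) *
          (((n : ℚ) * ((q : ℚ) ^ m - 1)) / ((v : ℚ) * ((e : ℚ) + 1)))⌉ := by
  subst hB
  simpa only [pengFanBound_mul_pow_sub_one hq.pos] using
    stmt17_general hq (by omega) hr he hn hA ⟨hCinj, hCnonrep, hCcross⟩ hs
      ((pengFanBound_mul_pow_sub_one hq.pos).trans (hceil.trans hSopt.symm))
end

section
/- For a single sequence s = (φ(θ^k + α))_{k=0}^{q^m−2} from the main construction with r ≥ 2 and α = α_i ∉ V (2 ≤ i ≤ ℓ), the Hamming autocorrelation H_{s,s}(τ) is at most r·q^t for all 1 ≤ τ ≤ q^m − 2; consequently s is a (q^m − 1, r·q^t) frequency hopping sequence over an alphabet of size (q^{m-t}−1)/r + 1. -/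
open Polynomial Finset
open scoped Classical

/-- The polynomial `φ(x) = ∏_{g ∈ G} ∏_{β ∈ V} (x + g + β)`. -/
noncomputable def phiPoly {Fq K : Type*} [Field Fq] [Field K] [Fintype K] [Algebra Fq K]
    (G : Subgroup Kˣ) (V : Submodule Fq K) : Polynomial K :=
  ∏ g : G, ∏ β : V, (X + C ((g : Kˣ) : K) + C (β : K))

/-!
For `g ∈ G` and `v ∈ V` we have `φ (x g + v) = φ x`, so `φ` only takes the values `φ (α j)` as soon
as the cosets `α j g + V` cover `K`.

When `a ∉ V` the points `a g + v` are pairwise distinct, so they are `deg φ = |G| |V|` roots of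
`φ - φ a`. Hence `a` is a simple root and `φ' a ≠ 0`. The coefficient of `X` in
`φ (X + a) - φ (u X + a)` is `(1 - u) φ' a`, so for `u = θ ^ τ ≠ 1` this polynomial is nonzero of
degree at most `deg φ`, and its roots include all `θ ^ k` at positions `k` where the sequence agrees
with its shift by `τ`.
-/

section SimpleRoots

variable {R : Type*} [CommRing R] [IsDomain R]

lemma eval_derivative_ne_zero_of_natDegree_le_card {p : R[X]} (hp : p ≠ 0) {S : Finset R}
    (hS : ∀ x ∈ S, p.eval x = 0) (hcard : p.natDegree ≤ #S) {a : R} (ha : a ∈ S) :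
    (derivative p).eval a ≠ 0 := by
  intro hder
  have hroots : p.roots = S.val := roots_eq_of_natDegree_le_card_of_ne_zero hS hcard hp
  have hmult : p.rootMultiplicity a ≤ 1 := by
    rw [← count_roots, hroots]
    exact Multiset.nodup_iff_count_le_one.1 S.nodup a
  exact hmult.not_gt ((one_lt_rootMultiplicity_iff_isRoot hp).2 ⟨hS a ha, hder⟩)

lemma comp_X_add_C_ne_comp_C_mul_X_add_C {p : R[X]} {a u : R} (hu : u ≠ 1)
    (hder : (derivative p).eval a ≠ 0) :
    p.comp (X + C a) ≠ p.comp (C u * X + C a) := by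
  intro h
  have hcoeff : (derivative p).eval a = u * (derivative p).eval a := by
    simpa [derivative_comp] using congrArg (fun f => (derivative f).eval 0) h
  exact hu ((mul_eq_right₀ hder).1 hcoeff.symm)

lemma card_le_natDegree_of_eval_add_eq_eval_mul_add {p : R[X]} {a u : R} (hu : u ≠ 1)
    (hder : (derivative p).eval a ≠ 0) {S : Finset R}
    (hS : ∀ x ∈ S, p.eval (x + a) = p.eval (u * x + a)) : #S ≤ p.natDegree := by
  set P : R[X] := p.comp (X + C a) - p.comp (C u * X + C a) with hP
  have hP0 : P ≠ 0 := sub_ne_zero.2 (comp_X_add_C_ne_comp_C_mul_X_add_C hu hder)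
  have hroots : S.val ⊆ P.roots := fun x hx => by
    rw [mem_roots hP0, IsRoot.def, hP]
    simp [hS x hx]
  have hdeg : P.natDegree ≤ p.natDegree := by
    refine (natDegree_sub_le _ _).trans (max_le ?_ ?_) <;>
      refine natDegree_comp_le.trans (mul_le_of_le_one_right' ?_)
    · exact (natDegree_X_add_C a).le
    · exact natDegree_linear_le
  exact (card_le_degree_of_subset_roots hroots).trans hdeg

end SimpleRoots

/-- The Hamming autocorrelation `H_{s,s}(τ)` of a sequence `s` of period `n`: the number of
positions in one period at which `s` agrees with its shift by `τ`. Only the values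
`s 0, …, s (n - 1)` matter, since indices are reduced modulo `n`. -/
noncomputable def hammingAutocorrelation {A : Type*} (n : ℕ) (s : ℕ → A) (τ : ℕ) : ℕ :=
  #{k ∈ range n | s k = s ((k + τ) % n)}

lemma hammingAutocorrelation_eval_pow_add_le {R : Type*} [CommRing R] [IsDomain R] {p : R[X]}
    {a : R} (hder : (derivative p).eval a ≠ 0) (θ : Rˣ) {τ : ℕ} (hτ : ¬ orderOf θ ∣ τ) :
    hammingAutocorrelation (orderOf θ) (fun k => p.eval ((θ : R) ^ k + a)) τ ≤ p.natDegree := by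
  have hu : ((θ ^ τ : Rˣ) : R) ≠ 1 := fun h =>
    hτ (orderOf_dvd_of_pow_eq_one (Units.val_eq_one.1 h))
  have hshift (k : ℕ) : (θ : R) ^ ((k + τ) % orderOf θ) = (θ ^ τ : Rˣ) * (θ : R) ^ k := by
    rw [← Units.val_pow_eq_pow_val, ← Units.val_pow_eq_pow_val, pow_mod_orderOf, ← Units.val_mul,
      ← pow_add, add_comm]
  have hinj : Set.InjOn (fun k => (θ : R) ^ k) (range (orderOf θ)) := fun k hk l hl hkl =>
    pow_injOn_Iio_orderOf (mem_range.1 hk) (mem_range.1 hl) (Units.ext (by simpa using hkl))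
  rw [hammingAutocorrelation,
    ← card_image_of_injOn (hinj.mono (coe_subset.2 (filter_subset _ _)))]
  refine card_le_natDegree_of_eval_add_eq_eval_mul_add hu hder fun x hx => ?_
  obtain ⟨k, hk, rfl⟩ := mem_image.1 hx
  simpa only [hshift] using (mem_filter.1 hk).2

lemma coset_eq_coset_zero_of_mem {A : Type*} [AddGroup A] {H : AddSubgroup A} {a : A}
    (ha : a ∈ H) : coset (H : Set A) a = coset (H : Set A) 0 := by
  ext x
  constructor
  · rintro ⟨v, hv, rfl⟩
    exact ⟨a + v, H.add_mem ha hv, (zero_add _).symm⟩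
  · rintro ⟨v, hv, rfl⟩
    exact ⟨-a + v, H.add_mem (H.neg_mem ha) hv, by rw [zero_add, add_neg_cancel_left]⟩

section Submodule

variable {F A : Type*} [Field F] [CommRing A] [Algebra F A] {V : Submodule F A}

lemma injective_mul_add_of_notMem {G : Subgroup Aˣ}
    (hGsub : ∀ g : G, ∃ b : F, algebraMap F A b = ((g : Aˣ) : A)) {a : A} (ha : a ∉ V) :
    Function.Injective fun gv : G × V => a * ((gv.1 : Aˣ) : A) + (gv.2 : A) := by
  rintro ⟨g, v⟩ ⟨h, w⟩ heq
  obtain ⟨b, hb⟩ := hGsub g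
  obtain ⟨c, hc⟩ := hGsub h
  have hsmul : (b - c) • a = (w - v : A) := by
    rw [Algebra.smul_def, map_sub, hb, hc]
    linear_combination heq
  have hbc : b - c = 0 := by
    by_contra hne
    exact ha ((V.smul_mem_iff hne).1 (hsmul ▸ V.sub_mem w.2 v.2))
  obtain rfl : g = h := Subtype.ext (Units.ext (by rw [← hb, ← hc, sub_eq_zero.1 hbc]))
  exact Prod.ext rfl (Subtype.ext (add_left_cancel heq))

lemma prod_algebraMap_mul_add [Fintype V] {b : F} (hb : b ≠ 0) (x : A) :
    ∏ β : V, (algebraMap F A b * x + (β : A)) =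
      algebraMap F A b ^ Fintype.card V * ∏ β : V, (x + (β : A)) := by
  rw [← card_univ, ← prod_const, ← prod_mul_distrib]
  refine (Fintype.prod_equiv (LinearEquiv.smulOfNeZero F V b hb).toEquiv _ _ fun β => ?_).symm
  simp [Algebra.smul_def, mul_add]

end Submodule

section PhiPoly

variable {Fq K : Type*} [Field Fq] [Field K] [Fintype K] [Algebra Fq K] {V : Submodule Fq K}
  {G : Subgroup Kˣ}

lemma natDegree_phiPoly : (phiPoly G V).natDegree = Nat.card G * Nat.card V := by
  simp only [phiPoly, add_assoc, ← C_add]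
  rw [natDegree_prod_of_monic _ _ fun _ _ => monic_prod_of_monic _ _ fun _ _ => monic_X_add_C _]
  simp only [natDegree_prod_of_monic _ _ fun _ _ => monic_X_add_C _, natDegree_X_add_C, sum_const,
    card_univ, smul_eq_mul, mul_one, Nat.card_eq_fintype_card]

lemma eval_phiPoly (x : K) :
    (phiPoly G V).eval x = ∏ g : G, ∏ β : V, (x + ((g : Kˣ) : K) + (β : K)) := by
  simp only [phiPoly, eval_prod, eval_add, eval_X, eval_C]

lemma eval_phiPoly_add_of_mem (x : K) {v : K} (hv : v ∈ V) :
    (phiPoly G V).eval (x + v) = (phiPoly G V).eval x := by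
  rw [eval_phiPoly, eval_phiPoly]
  refine prod_congr rfl fun g _ => Fintype.prod_equiv (Equiv.addLeft (⟨v, hv⟩ : V)) _ _ fun β => ?_
  simp only [Equiv.coe_addLeft, Submodule.coe_add]
  ring

lemma eval_phiPoly_mul_coe (hGsub : ∀ g : G, ∃ b : Fq, algebraMap Fq K b = ((g : Kˣ) : K))
    (x : K) (g : G) :
    (phiPoly G V).eval (x * ((g : Kˣ) : K)) = (phiPoly G V).eval x := by
  obtain ⟨b, hb⟩ := hGsub g
  have hb0 : b ≠ 0 := by
    rintro rfl
    exact (g : Kˣ).ne_zero (by rw [← hb, map_zero])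
  have hpow : ((g : Kˣ) : K) ^ Fintype.card G = 1 := by
    rw [← Units.val_pow_eq_pow_val, ← Subgroup.coe_pow, pow_card_eq_one, Subgroup.coe_one,
      Units.val_one]
  calc (phiPoly G V).eval (x * ((g : Kˣ) : K))
      = ∏ h : G, ∏ β : V, (x * ((g : Kˣ) : K) + (((g * h : G) : Kˣ) : K) + (β : K)) := by
        rw [eval_phiPoly]
        exact (Fintype.prod_equiv (Equiv.mulLeft g) _ _ fun _ => rfl).symm
    _ = ∏ h : G, ∏ β : V, (algebraMap Fq K b * (x + ((h : Kˣ) : K)) + (β : K)) := by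
        simp only [hb, Subgroup.coe_mul, Units.val_mul, mul_add, mul_comm x]
    _ = ∏ h : G, algebraMap Fq K b ^ Fintype.card V *
          ∏ β : V, (x + ((h : Kˣ) : K) + (β : K)) := by
        simp only [prod_algebraMap_mul_add hb0]
    _ = (phiPoly G V).eval x := by
        rw [prod_mul_distrib, prod_const, card_univ, hb, pow_right_comm, hpow, one_pow, one_mul,
          eval_phiPoly]

lemma eval_derivative_phiPoly_ne_zero
    (hGsub : ∀ g : G, ∃ b : Fq, algebraMap Fq K b = ((g : Kˣ) : K)) {a : K} (ha : a ∉ V) :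
    (derivative (phiPoly G V)).eval a ≠ 0 := by
  set p := phiPoly G V - C ((phiPoly G V).eval a) with hp
  set S : Finset K := univ.image fun gv : G × V => a * ((gv.1 : Kˣ) : K) + (gv.2 : K) with hS
  have hroot : ∀ x ∈ S, p.eval x = 0 := fun x hx => by
    obtain ⟨⟨g, v⟩, -, rfl⟩ := mem_image.1 hx
    rw [hp, eval_sub, eval_C, eval_phiPoly_add_of_mem _ v.2, eval_phiPoly_mul_coe hGsub, sub_self]
  have hdeg : p.natDegree = Nat.card G * Nat.card V := by rw [natDegree_sub_C, natDegree_phiPoly]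
  have hcard : #S = Nat.card G * Nat.card V := by
    rw [hS, card_image_of_injective _ (injective_mul_add_of_notMem hGsub ha), card_univ,
      Fintype.card_prod, Nat.card_eq_fintype_card, Nat.card_eq_fintype_card]
  have hp0 : p ≠ 0 :=
    ne_zero_of_natDegree_gt (n := 0) (hdeg ▸ Nat.mul_pos Nat.card_pos Nat.card_pos)
  have haS : a ∈ S := mem_image.2 ⟨(1, 0), mem_univ _, by simp⟩
  simpa [hp] using
    eval_derivative_ne_zero_of_natDegree_le_card hp0 hroot (hdeg.trans hcard.symm).le haS

lemma range_eval_phiPoly_subset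
    (hGsub : ∀ g : G, ∃ b : Fq, algebraMap Fq K b = ((g : Kˣ) : K)) {ι : Type*} {α : ι → K}
    (hcover : (⋃ j, ⋃ g : G, coset (V : Set K) (α j * ((g : Kˣ) : K))) = Set.univ) :
    Set.range (phiPoly G V).eval ⊆ Set.range fun j => (phiPoly G V).eval (α j) := by
  rintro _ ⟨x, rfl⟩
  have hx : x ∈ ⋃ j, ⋃ g : G, coset (V : Set K) (α j * ((g : Kˣ) : K)) := hcover ▸ Set.mem_univ x
  simp only [Set.mem_iUnion] at hx
  obtain ⟨j, g, v, hv, rfl⟩ := hx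
  exact ⟨j, by simp only [eval_phiPoly_add_of_mem _ hv, eval_phiPoly_mul_coe hGsub]⟩

theorem stmt19_general (hGsub : ∀ g : G, ∃ b : Fq, algebraMap Fq K b = ((g : Kˣ) : K))
    {θ : Kˣ} (hθ : ∀ x : Kˣ, x ∈ Subgroup.zpowers θ) {a : K} (ha : a ∉ V)
    {ι : Type*} [Fintype ι] {α : ι → K}
    (hcover : (⋃ j, ⋃ g : G, coset (V : Set K) (α j * ((g : Kˣ) : K))) = Set.univ) :
    (∀ τ : ℕ, ¬ Fintype.card K - 1 ∣ τ →
      hammingAutocorrelation (Fintype.card K - 1)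
        (fun k => (phiPoly G V).eval ((θ : K) ^ k + a)) τ ≤ Nat.card G * Nat.card V) ∧
    #(image (fun k => (phiPoly G V).eval ((θ : K) ^ k + a)) (range (Fintype.card K - 1))) ≤
      Fintype.card ι := by
  have horder : orderOf θ = Fintype.card K - 1 := by
    rw [orderOf_eq_card_of_forall_mem_zpowers hθ, Nat.card_eq_fintype_card, Fintype.card_units]
  constructor
  · intro τ hτ
    rw [← horder, ← natDegree_phiPoly]
    exact hammingAutocorrelation_eval_pow_add_le (eval_derivative_phiPoly_ne_zero hGsub ha) θ
      (horder ▸ hτ)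
  · have hsubset : image (fun k => (phiPoly G V).eval ((θ : K) ^ k + a))
        (range (Fintype.card K - 1)) ⊆ univ.image fun j => (phiPoly G V).eval (α j) := by
      refine image_subset_iff.2 fun k _ => ?_
      obtain ⟨j, hj⟩ := range_eval_phiPoly_subset hGsub hcover
        (Set.mem_range_self ((θ : K) ^ k + a))
      exact mem_image.2 ⟨j, mem_univ j, hj⟩
    exact (card_le_card hsubset).trans card_image_le

end PhiPoly

/-- for a single sequence `s = (φ(θ^k + α_i))_k` with `r ≥ 2`,
`α_i ∉ V`, the Hamming autocorrelation at every delay `1 ≤ τ ≤ q^m - 2` is at most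
`r q^t`, and the sequence takes values in an alphabet of size at most
`(q^{m-t} - 1)/r + 1`. -/
theorem stmt19 (q r m t : ℕ) (hq : IsPrimePow q) (hm : 1 ≤ m) (ht : t ≤ m - 1)
    (hr : r ∣ q - 1)
    (Fq K : Type*) [Field Fq] [Fintype Fq] [Field K] [Fintype K] [Algebra Fq K]
    (hcq : Fintype.card Fq = q) (hcK : Fintype.card K = q ^ m)
    (V : Submodule Fq K) (hV : Module.finrank Fq V = t)
    (G : Subgroup Kˣ) (hG : Nat.card G = r)
    (hGsub : ∀ g : G, ∃ a : Fq, algebraMap Fq K a = ((g : Kˣ) : K))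
    (hr2 : 2 ≤ r)
    (θ : Kˣ) (hθ : ∀ x : Kˣ, x ∈ Subgroup.zpowers θ)
    (α : Fin ((q ^ (m - t) - 1) / r + 1) → K) (hα0 : α 0 = 0)
    (hne : ∀ (i : Fin ((q ^ (m - t) - 1) / r + 1)) (g : G), i ≠ 0 →
      coset (V : Set K) (α i * ((g : Kˣ) : K)) ≠ coset (V : Set K) 0)
    (hinj : ∀ (i j : Fin ((q ^ (m - t) - 1) / r + 1)) (gi gj : G), i ≠ 0 → j ≠ 0 →
      coset (V : Set K) (α i * ((gi : Kˣ) : K)) = coset (V : Set K) (α j * ((gj : Kˣ) : K)) →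
      i = j ∧ gi = gj)
    (hcover : (⋃ i, ⋃ g : G, coset (V : Set K) (α i * ((g : Kˣ) : K))) = Set.univ)
    (i : Fin ((q ^ (m - t) - 1) / r + 1)) (hi : i ≠ 0) :
    (∀ τ : ℕ, 1 ≤ τ → τ ≤ q ^ m - 2 →
      ((Finset.range (q ^ m - 1)).filter (fun k =>
        (phiPoly G V).eval (((θ : Kˣ) : K) ^ k + α i) =
        (phiPoly G V).eval (((θ : Kˣ) : K) ^ ((k + τ) % (q ^ m - 1)) + α i))).card
          ≤ r * q ^ t) ∧
    (Finset.image (fun k => (phiPoly G V).eval (((θ : Kˣ) : K) ^ k + α i))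
        (Finset.range (q ^ m - 1))).card ≤ (q ^ (m - t) - 1) / r + 1 := by
  have hV' : Nat.card V = q ^ t := by
    rw [Module.natCard_eq_pow_finrank (K := Fq), Nat.card_eq_fintype_card, hcq, hV]
  have hαV : α i ∉ V := fun h =>
    hne i 1 hi (coset_eq_coset_zero_of_mem (H := V.toAddSubgroup) (by simpa using h))
  obtain ⟨hcorr, halphabet⟩ := stmt19_general hGsub hθ hαV hcover
  rw [hcK, hG, hV'] at hcorr
  rw [hcK, Fintype.card_fin] at halphabet
  exact ⟨fun τ hτ hτ' => hcorr τ (Nat.not_dvd_of_pos_of_lt hτ (by omega)), halphabet⟩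
end
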